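/- Suppose Conditions (A1')–(A4') hold. Fix ε ∈ (0,1) and η0 ∈ (0, ε), and let τ_n be the GSPRT stopping time with upper threshold A_n = n·min_{γ∈Γ}(D(p_γ‖p0) + Φ^{-1}(ε − η0)·√(V(p_γ‖p0)/n)) (and any lower threshold B_n > 0). Then there is a finite constant T1, depending only on the uniformly bounded second and third absolute moments of ξ(γ) over Γ, such that for every γ0 ∈ Γ, P_{γ0}(τ_n > n) ≤ ε − η0 + T1/√n; consequently there exists n1(ε) such that sup_{γ∈Γ} P_γ(τ_n > n) < ε for all n > n1(ε). -/

import Mathlib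

open MeasureTheory ProbabilityTheory Filter

noncomputable section

/-- The σ-algebra on the sequence space `ℕ → 𝒳` generated by the first `n`
coordinates `X^n = (X_0, …, X_{n-1})`. -/
def cylSA (𝒳 : Type*) [MeasurableSpace 𝒳] (n : ℕ) : MeasurableSpace (ℕ → 𝒳) :=
  MeasurableSpace.comap (fun ω (i : Fin n) => ω i) MeasurableSpace.pi

/-- `τ` is a stopping time adapted to the natural filtration of the coordinate
process on `ℕ → 𝒳` (`τ` may take the value `∞`). -/
def IsStoppingTimeCyl {𝒳 : Type*} [MeasurableSpace 𝒳] (τ : (ℕ → 𝒳) → ℕ∞) : Prop :=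
  ∀ n : ℕ, MeasurableSet[cylSA 𝒳 n] {ω | τ ω ≤ (n : ℕ∞)}

/-- The event `A` belongs to the stopped σ-algebra `F_τ`. -/
def StopMeasurableCyl {𝒳 : Type*} [MeasurableSpace 𝒳] (τ : (ℕ → 𝒳) → ℕ∞)
    (A : Set (ℕ → 𝒳)) : Prop :=
  ∀ n : ℕ, MeasurableSet[cylSA 𝒳 n] (A ∩ {ω | τ ω ≤ (n : ℕ∞)})

/-- `P` is the law of an i.i.d. sequence of `𝒳`-valued random variables with
common marginal distribution `ν`, characterized through the finite-dimensional
cylinder probabilities. -/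
def IsIIDLaw {𝒳 : Type*} [MeasurableSpace 𝒳] (P : Measure (ℕ → 𝒳)) (ν : Measure 𝒳) : Prop :=
  IsProbabilityMeasure P ∧
  ∀ (n : ℕ) (A : Fin n → Set 𝒳), (∀ i, MeasurableSet (A i)) →
    P {ω | ∀ i : Fin n, ω i ∈ A i} = ∏ i, ν (A i)

/-- The log-likelihood ratio `S_n(γ) = Σ_{i<n} log (p_γ(X_i) / p_0(X_i))`
(here `q = p_γ`). -/
def llr {𝒳 : Type*} (p0 q : 𝒳 → ℝ) (n : ℕ) (ω : ℕ → 𝒳) : ℝ :=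
  ∑ k ∈ Finset.range n, Real.log (q (ω k) / p0 (ω k))

/-- The maximal log-likelihood ratio `S_n = sup_{γ ∈ Γ} S_n(γ)`. -/
def maxLlr {𝒳 : Type*} {d : ℕ} (p0 : 𝒳 → ℝ) (p : (Fin d → ℝ) → 𝒳 → ℝ)
    (Γ : Set (Fin d → ℝ)) (n : ℕ) (ω : ℕ → 𝒳) : ℝ :=
  ⨆ γ ∈ Γ, llr p0 (p γ) n ω

/-- The GSPRT stopping time `τ = inf {n : S_n > A or S_n < -B}`. -/
def gsprtTau {𝒳 : Type*} {d : ℕ} (p0 : 𝒳 → ℝ) (p : (Fin d → ℝ) → 𝒳 → ℝ)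
    (Γ : Set (Fin d → ℝ)) (A B : ℝ) (ω : ℕ → 𝒳) : ℕ∞ :=
  sInf {m : ℕ∞ | ∃ k : ℕ, m = k ∧
    (A < maxLlr p0 p Γ k ω ∨ maxLlr p0 p Γ k ω < -B)}

open scoped Classical in
/-- The GSPRT decision rule: `δ = 1` iff `S_τ > A`. -/
def gsprtDelta {𝒳 : Type*} {d : ℕ} (p0 : 𝒳 → ℝ) (p : (Fin d → ℝ) → 𝒳 → ℝ)
    (Γ : Set (Fin d → ℝ)) (A B : ℝ) (ω : ℕ → 𝒳) : Bool :=
  if A < maxLlr p0 p Γ (gsprtTau p0 p Γ A B ω).toNat ω then true else false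

/-- The Kullback--Leibler divergence `D(p‖q) = ∫ p log (p/q) dμ` between the
densities `p` and `q` with respect to the base measure `μ`. -/
def klCts {𝒳 : Type*} [MeasurableSpace 𝒳] (μ : Measure 𝒳) (p q : 𝒳 → ℝ) : ℝ :=
  ∫ x, p x * Real.log (p x / q x) ∂μ

/-- KL divergence between pmfs on `Fin d`. -/
def klFin {d : ℕ} (p q : Fin d → ℝ) : ℝ := ∑ i, p i * Real.log (p i / q i)

/-- Relative entropy variance between pmfs on `Fin d`:
`V(p‖q) = Var_p[log (p(X)/q(X))]`. -/
def vFin {d : ℕ} (p q : Fin d → ℝ) : ℝ :=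
  ∑ i, p i * (Real.log (p i / q i)) ^ 2 - (klFin p q) ^ 2

/-- The standard normal cumulative distribution function `Φ`. -/
def stdGaussCDF (x : ℝ) : ℝ :=
  (Real.sqrt (2 * Real.pi))⁻¹ * ∫ t in Set.Iic x, Real.exp (-(t ^ 2) / 2)

/-- The Karush--Kuhn--Tucker map associated to the optimization problem
`min Σ_i q i log (p0 i / γ i)` subject to `Σ_i γ i = 1`, `F γ ≤ 0`; Condition
(A4') is the nonsingularity of its Jacobian at the optimizer for `q = p0`. -/
def kktMap {d : ℕ} (F : (Fin d → ℝ) → ℝ) :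
    ((Fin d → ℝ) × ℝ × ℝ) → ((Fin d → ℝ) × ℝ × ℝ) := fun x =>
  (fun i => x.2.1 * x.1 i + x.2.2 * x.1 i * fderiv ℝ F x.1 (Pi.single i 1),
    ∑ i, x.1 i, F x.1)

/-- `P` is the law of an i.i.d. sequence of `Fin d`-valued random variables with
common pmf `p`, characterized through cylinder probabilities. -/
def IsIIDPmfLaw {d : ℕ} (P : Measure (ℕ → Fin d)) (p : Fin d → ℝ) : Prop :=
  IsProbabilityMeasure P ∧
  ∀ (n : ℕ) (a : Fin n → Fin d),
    P {ω | ∀ i : Fin n, ω i = a i} = ∏ i, ENNReal.ofReal (p (a i))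

/-- The sequence of sequential hypothesis tests `(δ_n, τ_n)` satisfies the
probabilistic constraints on the stopping time with tolerance `ε`. -/
def GoodTestSeq {𝒳 : Type*} [MeasurableSpace 𝒳] {d : ℕ} (Γ : Set (Fin d → ℝ))
    (P0 : Measure (ℕ → 𝒳)) (P : (Fin d → ℝ) → Measure (ℕ → 𝒳)) (ε : ℝ)
    (τs : ℕ → (ℕ → 𝒳) → ℕ∞) (δs : ℕ → (ℕ → 𝒳) → Bool) : Prop :=
  (∀ n, IsStoppingTimeCyl (τs n)) ∧
  (∀ n, StopMeasurableCyl (τs n) {ω | δs n ω = true}) ∧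
  (∀ n, P0 {ω | τs n ω ≠ ⊤} = 1 ∧ ∀ γ ∈ Γ, P γ {ω | τs n ω ≠ ⊤} = 1) ∧
  (∀ᶠ n : ℕ in Filter.atTop,
    P0 {ω | (n : ℕ∞) < τs n ω} < ENNReal.ofReal ε ∧
    (⨆ γ ∈ Γ, P γ {ω | (n : ℕ∞) < τs n ω}) < ENNReal.ofReal ε)

/-- The second-order exponent pair `(G_0, G_1)` is attained by the test sequence
`(δ_n, τ_n)` relative to the first-order terms `D_0 = D(p_{γ*}‖p_0)` and
`D_1 = D(p_0‖p_{γ'})`: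
`G_0 ≤ liminf n^{-1/2} (log (1/P_{1|0}(δ_n,τ_n)) - n D_0)` and
`G_1 ≤ liminf n^{-1/2} (log (1/P_{0|1}(δ_n,τ_n)) - n D_1)`. -/
def AchievesSecondOrder {𝒳 : Type*} [MeasurableSpace 𝒳] {d : ℕ} (Γ : Set (Fin d → ℝ))
    (P0 : Measure (ℕ → 𝒳)) (P : (Fin d → ℝ) → Measure (ℕ → 𝒳)) (D0 D1 G0 G1 : ℝ)
    (τs : ℕ → (ℕ → 𝒳) → ℕ∞) (δs : ℕ → (ℕ → 𝒳) → Bool) : Prop :=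
  G0 ≤ Filter.liminf (fun n : ℕ =>
      (-Real.log ((P0 {ω | δs n ω = true}).toReal) - n * D0) / Real.sqrt n)
      Filter.atTop ∧
  G1 ≤ Filter.liminf (fun n : ℕ =>
      (-Real.log ((⨆ γ ∈ Γ, P γ {ω | δs n ω = false}).toReal) - n * D1) / Real.sqrt n)
      Filter.atTop

namespace BE

lemma phi_int : Integrable (fun t : ℝ => Real.exp (-(t ^ 2) / 2)) := by
  have := integrable_exp_neg_mul_sq (b := 1 / 2) (by norm_num)
  refine this.congr (Eventually.of_forall fun t => ?_)
  simp only; congr 1; ring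

lemma phi_total : ∫ t : ℝ, Real.exp (-(t ^ 2) / 2) = Real.sqrt (2 * Real.pi) := by
  have := integral_gaussian (1 / 2)
  rw [show Real.pi / (1 / 2) = 2 * Real.pi by ring] at this
  rw [← this]
  congr 1; ext t; congr 1; ring

lemma sq_pos : 0 < Real.sqrt (2 * Real.pi) := by
  have := Real.pi_pos; positivity

lemma sq_ge : 1 ≤ Real.sqrt (2 * Real.pi) := by
  rw [Real.one_le_sqrt]; linarith [Real.pi_gt_three]

lemma sq_le : Real.sqrt (2 * Real.pi) ≤ 3 := by
  rw [Real.sqrt_le_left (by norm_num)]; linarith [Real.pi_lt_d2]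

lemma cdf_nonneg (x : ℝ) : 0 ≤ stdGaussCDF x := by
  unfold stdGaussCDF
  exact mul_nonneg (inv_nonneg.2 sq_pos.le) (integral_nonneg fun t => (Real.exp_pos _).le)

lemma one_sub_cdf (x : ℝ) : 1 - stdGaussCDF x =
    (Real.sqrt (2 * Real.pi))⁻¹ * ∫ t in Set.Ioi x, Real.exp (-(t ^ 2) / 2) := by
  have h := intervalIntegral.integral_Iic_add_Ioi (b := x) phi_int.integrableOn phi_int.integrableOn
  rw [phi_total] at h
  have : (1 : ℝ) = (Real.sqrt (2 * Real.pi))⁻¹ * Real.sqrt (2 * Real.pi) :=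
    (inv_mul_cancel₀ sq_pos.ne').symm
  unfold stdGaussCDF
  rw [this, ← h]
  ring

lemma one_sub_nonneg (x : ℝ) : 0 ≤ 1 - stdGaussCDF x := by
  rw [one_sub_cdf]
  exact mul_nonneg (inv_nonneg.2 sq_pos.le) (integral_nonneg fun t => (Real.exp_pos _).le)

lemma cdf_neg (x : ℝ) : stdGaussCDF (-x) = 1 - stdGaussCDF x := by
  rw [one_sub_cdf, stdGaussCDF]
  congr 1
  have := integral_comp_neg_Iic (-x) (fun t : ℝ => Real.exp (-(t ^ 2) / 2))
  simpa using this

lemma cdf_sub (x y : ℝ) : stdGaussCDF y - stdGaussCDF x =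
    (Real.sqrt (2 * Real.pi))⁻¹ * ∫ t in x..y, Real.exp (-(t ^ 2) / 2) := by
  rw [← intervalIntegral.integral_Iic_sub_Iic phi_int.integrableOn phi_int.integrableOn]
  unfold stdGaussCDF; ring

lemma phi_cont : Continuous (fun t : ℝ => Real.exp (-(t ^ 2) / 2)) := by fun_prop

lemma cdf_deriv (x : ℝ) : HasDerivAt stdGaussCDF
    ((Real.sqrt (2 * Real.pi))⁻¹ * Real.exp (-(x ^ 2) / 2)) x := by
  have h : stdGaussCDF = fun y => stdGaussCDF 0 +
      (Real.sqrt (2 * Real.pi))⁻¹ * ∫ t in (0:ℝ)..y, Real.exp (-(t ^ 2) / 2) := by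
    ext y; rw [← cdf_sub]; ring
  rw [h]
  exact ((phi_cont.integral_hasStrictDerivAt 0 x).hasDerivAt.const_mul _).const_add _

lemma cdf_cont : Continuous stdGaussCDF :=
  continuous_iff_continuousAt.2 fun x => (cdf_deriv x).continuousAt

lemma cdf_mono : Monotone stdGaussCDF := by
  refine monotone_of_hasDerivAt_nonneg cdf_deriv fun x => ?_
  exact mul_nonneg (inv_nonneg.2 sq_pos.le) (Real.exp_pos _).le

lemma cdf_lip (x δ : ℝ) (hδ : 0 ≤ δ) : stdGaussCDF (x + δ) ≤ stdGaussCDF x + δ := by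
  have h := cdf_sub x (x + δ)
  have h1 : ∫ t in x..(x+δ), Real.exp (-(t ^ 2) / 2) ≤ ∫ t in x..(x+δ), (1:ℝ) := by
    apply intervalIntegral.integral_mono_on (by linarith)
      (phi_cont.intervalIntegrable _ _) (by simp)
    intro t _
    rw [Real.exp_le_one_iff]; nlinarith [sq_nonneg t]
  have h2 : ∫ t in x..(x+δ), (1:ℝ) = δ := by simp
  rw [h2] at h1
  have h3 : (Real.sqrt (2 * Real.pi))⁻¹ ≤ 1 := inv_le_one_of_one_le₀ sq_ge
  have h4 : (Real.sqrt (2 * Real.pi))⁻¹ * ∫ t in x..(x+δ), Real.exp (-(t ^ 2) / 2)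
      ≤ (Real.sqrt (2 * Real.pi))⁻¹ * δ :=
    mul_le_mul_of_nonneg_left h1 (inv_nonneg.2 sq_pos.le)
  nlinarith

/-- Mills-type function -/
def mil (w : ℝ) : ℝ := Real.sqrt (2 * Real.pi) * Real.exp (w ^ 2 / 2)

lemma mil_pos (w : ℝ) : 0 < mil w := mul_pos sq_pos (Real.exp_pos _)

lemma mills (w : ℝ) (hw : 0 ≤ w) : w * (mil w * (1 - stdGaussCDF w)) ≤ 1 := by
  have hlim : Tendsto (fun t : ℝ => -Real.exp (-(t ^ 2) / 2)) atTop (nhds (-0)) := by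
    refine Tendsto.neg ?_
    refine Real.tendsto_exp_atBot.comp ?_
    have : Tendsto (fun t : ℝ => t ^ 2 / 2) atTop atTop :=
      (tendsto_pow_atTop (by norm_num)).atTop_div_const (by norm_num)
    refine (tendsto_neg_atTop_atBot.comp this).congr fun t => ?_
    simp only [Function.comp]; ring
  have hd : ∀ t ∈ Set.Ici w, HasDerivAt (fun t : ℝ => -Real.exp (-(t ^ 2) / 2))
      (t * Real.exp (-(t ^ 2) / 2)) t := by
    intro t _
    have := ((((hasDerivAt_id t).pow 2).neg.div_const 2).exp).neg
    convert! this using 1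
    simp; ring
  have hnn : ∀ t ∈ Set.Ioi w, 0 ≤ t * Real.exp (-(t ^ 2) / 2) := fun t ht =>
    mul_nonneg (hw.trans (le_of_lt ht)) (Real.exp_pos _).le
  have hi := integral_Ioi_of_hasDerivAt_of_nonneg' hd hnn hlim
  have hio := integrableOn_Ioi_deriv_of_nonneg' hd hnn hlim
  have hle : ∫ t in Set.Ioi w, w * Real.exp (-(t ^ 2) / 2)
      ≤ ∫ t in Set.Ioi w, t * Real.exp (-(t ^ 2) / 2) := by
    refine setIntegral_mono_on (phi_int.integrableOn.const_mul w) hio measurableSet_Ioi ?_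
    intro t ht
    exact mul_le_mul_of_nonneg_right (le_of_lt ht) (Real.exp_pos _).le
  rw [hi, integral_const_mul] at hle
  rw [one_sub_cdf]
  unfold mil
  have he : w * (Real.sqrt (2 * Real.pi) * Real.exp (w ^ 2 / 2) * ((Real.sqrt (2 * Real.pi))⁻¹ *
      ∫ t in Set.Ioi w, Real.exp (-(t ^ 2) / 2))) =
      Real.exp (w ^ 2 / 2) * (w * ∫ t in Set.Ioi w, Real.exp (-(t ^ 2) / 2)) := by
    field_simp [sq_pos.ne']
  rw [he]
  calc _ ≤ Real.exp (w ^ 2 / 2) * (-0 - -Real.exp (-(w ^ 2) / 2)) :=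
        mul_le_mul_of_nonneg_left hle (Real.exp_pos _).le
    _ = 1 := by
        rw [show (-0 - -Real.exp (-(w ^ 2) / 2)) = Real.exp (-(w ^ 2) / 2) by ring, ← Real.exp_add]
        simp; ring

lemma mills' (w : ℝ) (hw : 0 ≤ w) : mil w * (1 - stdGaussCDF w) ≤ 9 := by
  have h0 : 0 ≤ mil w * (1 - stdGaussCDF w) := mul_nonneg (mil_pos w).le (one_sub_nonneg w)
  rcases le_total 1 w with h | h
  · have := mills w hw; nlinarith
  · have h1 : Real.exp (w ^ 2 / 2) ≤ 3 := by
      have : Real.exp (w ^ 2 / 2) ≤ Real.exp 1 := Real.exp_le_exp.2 (by nlinarith)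
      linarith [Real.exp_one_lt_d9]
    have h2 : mil w ≤ 9 := by
      unfold mil; nlinarith [sq_le, sq_pos, Real.exp_pos (w ^ 2 / 2)]
    have h3 := cdf_nonneg w
    have h4 := mil_pos w
    nlinarith

/-- Solution of the Stein equation for the half line. -/
def sf (Z w : ℝ) : ℝ := mil w * (stdGaussCDF (min w Z) * (1 - stdGaussCDF (max w Z)))

open scoped Classical in
/-- Its derivative. -/
def sg (Z w : ℝ) : ℝ := w * sf Z w + (if w ≤ Z then 1 else 0) - stdGaussCDF Z

lemma mil_cont : Continuous mil := by unfold mil; fun_prop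

lemma sf_cont (Z : ℝ) : Continuous (sf Z) := by
  unfold sf
  have := cdf_cont
  have := mil_cont
  fun_prop

lemma sf_nonneg (Z w : ℝ) : 0 ≤ sf Z w :=
  mul_nonneg (mil_pos w).le (mul_nonneg (cdf_nonneg _) (one_sub_nonneg _))

lemma sf_le_right (Z w : ℝ) : sf Z w ≤ mil w * (1 - stdGaussCDF w) := by
  unfold sf
  refine mul_le_mul_of_nonneg_left ?_ (mil_pos w).le
  have h1 := cdf_mono (le_max_left w Z)
  have h2 := one_sub_nonneg (min w Z)
  have h3 := one_sub_nonneg (max w Z)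
  nlinarith

lemma sf_le_left (Z w : ℝ) : sf Z w ≤ mil w * stdGaussCDF w := by
  unfold sf
  refine mul_le_mul_of_nonneg_left ?_ (mil_pos w).le
  have h1 := cdf_mono (min_le_left w Z)
  have h2 := cdf_nonneg (min w Z)
  have h3 := cdf_nonneg (max w Z)
  nlinarith

lemma sf_bounds (Z w : ℝ) : sf Z w ≤ 9 ∧ |w * sf Z w| ≤ 1 := by
  have h0 := sf_nonneg Z w
  rcases le_total 0 w with h | h
  · have h1 := sf_le_right Z w
    refine ⟨h1.trans (mills' w h), ?_⟩
    rw [abs_of_nonneg (mul_nonneg h h0)]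
    exact (mul_le_mul_of_nonneg_left h1 h).trans (mills w h)
  · have h1 := sf_le_left Z w
    have h2 : mil w * stdGaussCDF w = mil (-w) * (1 - stdGaussCDF (-w)) := by
      rw [← cdf_neg]; simp [mil]
    rw [h2] at h1
    refine ⟨h1.trans (mills' (-w) (by linarith)), ?_⟩
    rw [abs_mul, abs_of_nonpos h, abs_of_nonneg h0]
    exact (mul_le_mul_of_nonneg_left h1 (by linarith)).trans (mills (-w) (by linarith))

lemma sg_bound (Z w : ℝ) : |sg Z w| ≤ 2 := by
  have h1 := abs_le.1 (sf_bounds Z w).2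
  have h2 := cdf_nonneg Z
  have h3 := one_sub_nonneg Z
  unfold sg
  rw [abs_le]
  split_ifs <;> constructor <;> linarith

lemma sg_meas (Z : ℝ) : Measurable (sg Z) := by
  unfold sg
  have h := (sf_cont Z).measurable
  have h2 : Measurable (fun w : ℝ => if w ≤ Z then (1:ℝ) else 0) :=
    Measurable.ite measurableSet_Iic measurable_const measurable_const
  refine ((measurable_id.mul h).add ?_).sub_const _
  convert h2

lemma mil_deriv (w : ℝ) : HasDerivAt mil (w * mil w) w := by
  have := ((((hasDerivAt_id w).pow 2).div_const 2).exp).const_mul (Real.sqrt (2 * Real.pi))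
  convert! this using 1
  simp [mil]; ring

lemma mil_mul (w : ℝ) : mil w * ((Real.sqrt (2 * Real.pi))⁻¹ * Real.exp (-(w ^ 2) / 2)) = 1 := by
  unfold mil
  have : Real.exp (w ^ 2 / 2) * Real.exp (-(w ^ 2) / 2) = 1 := by
    rw [← Real.exp_add]; simp; ring
  have h := sq_pos.ne'
  field_simp
  rw [← this]; ring_nf

lemma sf_deriv (Z w : ℝ) (hw : w ≠ Z) : HasDerivAt (sf Z) (sg Z w) w := by
  have hm := mil_mul w
  rcases lt_or_gt_of_ne hw with h | h
  · have he : sf Z =ᶠ[nhds w] fun w => mil w * (stdGaussCDF w * (1 - stdGaussCDF Z)) := by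
      filter_upwards [Iio_mem_nhds h] with y hy
      unfold sf; rw [min_eq_left (le_of_lt hy), max_eq_right (le_of_lt hy)]
    refine HasDerivAt.congr_of_eventuallyEq ?_ he
    convert! (mil_deriv w).mul ((cdf_deriv w).mul_const (1 - stdGaussCDF Z)) using 1
    rw [sg, he.eq_of_nhds, if_pos h.le]
    linear_combination (-(1 - stdGaussCDF Z)) * hm
  · have he : sf Z =ᶠ[nhds w] fun w => mil w * (stdGaussCDF Z * (1 - stdGaussCDF w)) := by
      filter_upwards [Ioi_mem_nhds h] with y hy
      unfold sf; rw [min_eq_right (le_of_lt hy), max_eq_left (le_of_lt hy)]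
    refine HasDerivAt.congr_of_eventuallyEq ?_ he
    convert! (mil_deriv w).mul (((cdf_deriv w).const_sub 1).const_mul (stdGaussCDF Z)) using 1
    rw [sg, he.eq_of_nhds, if_neg (not_le.2 h)]
    linear_combination (stdGaussCDF Z) * hm

lemma sg_ii (Z w u a b : ℝ) : IntervalIntegrable (fun s => sg Z (w + u * s)) volume a b := by
  have hm : Measurable (fun s => sg Z (w + u * s)) := (sg_meas Z).comp (by fun_prop)
  refine (intervalIntegrable_const (c := (2:ℝ))).mono_fun hm.aestronglyMeasurable ?_
  refine Eventually.of_forall fun s => ?_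
  simpa using sg_bound Z _

lemma sf_ftc (Z w u : ℝ) : sf Z (w + u) - sf Z w = u * ∫ s in (0:ℝ)..1, sg Z (w + u * s) := by
  rw [intervalIntegral.mul_integral_comp_add_mul]
  rw [integral_eq_of_hasDerivAt_off_countable (sf Z) (sg Z) (Set.countable_singleton Z)
    (sf_cont Z).continuousOn (fun x hx => sf_deriv Z x hx.2)]
  · simp
  · simpa using sg_ii Z 0 1 (w + u * 0) (w + u * 1)

lemma sf_lip (Z w u : ℝ) : |sf Z (w + u) - sf Z w| ≤ 2 * |u| := by
  rw [sf_ftc, abs_mul, mul_comm]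
  refine mul_le_mul_of_nonneg_right ?_ (abs_nonneg u)
  have := intervalIntegral.norm_integral_le_of_norm_le_const (a := 0) (b := 1) (C := 2)
    (f := fun s => sg Z (w + u * s)) (fun s _ => sg_bound Z _)
  simpa using this

lemma wsf (Z w v δ : ℝ) (h : |v - w| ≤ δ) :
    w * sf Z w ≤ v * sf Z v + (2 * |w| + 9) * δ := by
  have h1 := sf_lip Z w (v - w)
  rw [add_sub_cancel] at h1
  have h2 : w * (sf Z w - sf Z v) ≤ |w| * (2 * δ) := by
    refine (le_abs_self _).trans ?_
    rw [abs_mul, abs_sub_comm]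
    exact mul_le_mul_of_nonneg_left (h1.trans (by linarith)) (abs_nonneg w)
  have h3 : (w - v) * sf Z v ≤ δ * 9 := by
    have := sf_nonneg Z v
    have := (sf_bounds Z v).1
    have := abs_le.1 h
    have : 0 ≤ δ := (abs_nonneg _).trans h
    nlinarith
  linarith

open scoped Classical in
/-- Pointwise Stein inequality. -/
lemma pointwise (z δ w y u : ℝ) (h : ∀ s ∈ Set.Icc (0:ℝ) 1, |y + u * s - w| ≤ δ) :
    (if w ≤ z then (1:ℝ) else 0) ≤ stdGaussCDF (z + δ) - w * sf (z + δ) w + (2 * |w| + 9) * δ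
      + ∫ s in (0:ℝ)..1, sg (z + δ) (y + u * s) := by
  set Z := z + δ with hZ
  have key : ∀ s ∈ Set.Icc (0:ℝ) 1, (if w ≤ z then (1:ℝ) else 0) - (stdGaussCDF Z - w * sf Z w
      + (2 * |w| + 9) * δ) ≤ sg Z (y + u * s) := by
    intro s hs
    have h1 := wsf Z w _ δ (h s hs)
    have h2 := abs_le.1 (h s hs)
    have h3 : (if w ≤ z then (1:ℝ) else 0) ≤ if y + u * s ≤ Z then (1:ℝ) else 0 := by
      split_ifs <;> first | (exfalso; linarith) | norm_num
    unfold sg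
    linarith
  have := intervalIntegral.integral_mono_on (zero_le_one' ℝ) (by simp) (sg_ii Z y u 0 1) key
  simp only [intervalIntegral.integral_const, sub_zero, one_smul] at this
  linarith

end BE
namespace BE
variable {d n : ℕ}

/-- product weight -/
def pw (γ : Fin d → ℝ) (a : Fin n → Fin d) : ℝ := ∏ i, γ (a i)

lemma resample (γ : Fin d → ℝ) (h1 : ∑ b, γ b = 1) (i : Fin n) (g : (Fin n → Fin d) → ℝ) :
    ∑ a, pw γ a * g a = ∑ a, pw γ a * ∑ b, γ b * g (Function.update a i b) := by
  have hL : ∑ a : Fin n → Fin d, pw γ a * g a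
      = ∑ q : (Fin n → Fin d) × Fin d, pw γ q.1 * (γ q.2 * g q.1) := by
    rw [Fintype.sum_prod_type]
    refine Finset.sum_congr rfl fun a _ => ?_
    dsimp only
    rw [← Finset.mul_sum, ← Finset.sum_mul, h1, one_mul]
  have hR : ∑ a : Fin n → Fin d, pw γ a * ∑ b, γ b * g (Function.update a i b)
      = ∑ q : (Fin n → Fin d) × Fin d, pw γ q.1 * (γ q.2 * g (Function.update q.1 i q.2)) := by
    rw [Fintype.sum_prod_type]
    refine Finset.sum_congr rfl fun a _ => ?_
    rw [Finset.mul_sum]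
  rw [hL, hR]
  let T : (Fin n → Fin d) × Fin d → (Fin n → Fin d) × Fin d :=
    fun q => (Function.update q.1 i q.2, q.1 i)
  have hT : Function.Involutive T := by
    rintro ⟨a, b⟩; simp [T]
  have hw : ∀ a : Fin n → Fin d, ∀ b, pw γ (Function.update a i b) * γ (a i) = pw γ a * γ b := by
    intro a b
    unfold pw
    rw [← Finset.mul_prod_erase _ _ (Finset.mem_univ i),
      ← Finset.mul_prod_erase _ (fun j => γ (a j)) (Finset.mem_univ i)]
    have : ∏ j ∈ Finset.univ.erase i, γ (Function.update a i b j)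
        = ∏ j ∈ Finset.univ.erase i, γ (a j) := by
      refine Finset.prod_congr rfl fun j hj => ?_
      rw [Function.update_of_ne (Finset.ne_of_mem_erase hj)]
    rw [this]; simp; ring
  rw [← Equiv.sum_comp hT.toPerm]
  refine Finset.sum_congr rfl fun q _ => ?_
  obtain ⟨a, b⟩ := q
  simp only [Function.Involutive.coe_toPerm, T]
  rw [← mul_assoc, ← mul_assoc, hw]

/-- the sum -/
def W (x : Fin d → ℝ) (a : Fin n → Fin d) : ℝ := ∑ i, x (a i)

lemma W_update (x : Fin d → ℝ) (a : Fin n → Fin d) (i : Fin n) (b : Fin d) :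
    W x (Function.update a i b) = W x a - x (a i) + x b := by
  unfold W
  rw [← Finset.add_sum_erase _ _ (Finset.mem_univ i),
    ← Finset.add_sum_erase _ (fun j => x (a j)) (Finset.mem_univ i)]
  have : ∑ j ∈ Finset.univ.erase i, x (Function.update a i b j)
      = ∑ j ∈ Finset.univ.erase i, x (a j) := by
    refine Finset.sum_congr rfl fun j hj => ?_
    rw [Function.update_of_ne (Finset.ne_of_mem_erase hj)]
  rw [this]; simp; ring

lemma pw_sum (γ : Fin d → ℝ) (h1 : ∑ b, γ b = 1) : ∑ a : Fin n → Fin d, pw γ a = 1 := by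
  unfold pw
  have := Finset.prod_univ_sum (fun _ : Fin n => (Finset.univ : Finset (Fin d))) (fun _ b => γ b)
  simp only [h1, Finset.prod_const_one, Fintype.piFinset_univ] at this
  exact this.symm

lemma pw_nonneg (γ : Fin d → ℝ) (h0 : ∀ b, 0 ≤ γ b) (a : Fin n → Fin d) : 0 ≤ pw γ a :=
  Finset.prod_nonneg fun _ _ => h0 _

lemma stein_id (γ x : Fin d → ℝ) (h1 : ∑ b, γ b = 1) (hx : ∑ b, γ b * x b = 0)
    (f : ℝ → ℝ) (J : ℝ → ℝ → ℝ) (hJ : ∀ w u, f (w + u) - f w = u * J w u) :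
    ∑ a : Fin n → Fin d, pw γ a * (W x a * f (W x a)) =
      ∑ a : Fin n → Fin d, pw γ a * ∑ i, ∑ b, γ b * x b ^ 2 * J (W x a - x (a i)) (x b) := by
  have hi : ∀ i : Fin n, ∑ a : Fin n → Fin d, pw γ a * (x (a i) * f (W x a)) =
      ∑ a : Fin n → Fin d, pw γ a * ∑ b, γ b * x b ^ 2 * J (W x a - x (a i)) (x b) := by
    intro i
    rw [resample γ h1 i]
    refine Finset.sum_congr rfl fun a _ => ?_
    congr 1
    have : ∀ b, γ b * x b ^ 2 * J (W x a - x (a i)) (x b) =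
        γ b * (x b * f (W x a - x (a i) + x b)) - γ b * x b * f (W x a - x (a i)) := by
      intro b
      linear_combination (- γ b * x b) * hJ (W x a - x (a i)) (x b)
    simp_rw [this, Finset.sum_sub_distrib, ← Finset.sum_mul, hx, zero_mul, sub_zero,
      W_update, Function.update_self]
  calc _ = ∑ i : Fin n, ∑ a : Fin n → Fin d, pw γ a * (x (a i) * f (W x a)) := by
        rw [Finset.sum_comm]
        refine Finset.sum_congr rfl fun a _ => ?_
        rw [← Finset.mul_sum, ← Finset.sum_mul]; rfl
    _ = _ := by
        simp_rw [hi]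
        rw [Finset.sum_comm]
        refine Finset.sum_congr rfl fun a _ => ?_
        rw [← Finset.mul_sum]

open scoped Classical in
lemma berry (γ x : Fin d → ℝ) (hn : 1 ≤ n) (h0 : ∀ b, 0 ≤ γ b) (h1 : ∑ b, γ b = 1)
    (hx : ∑ b, γ b * x b = 0) (hv : ∑ b, γ b * x b ^ 2 = 1 / n) (k : ℝ) (hk0 : 0 ≤ k)
    (hk : ∀ b, |x b| ≤ k) (z : ℝ) :
    ∑ a : Fin n → Fin d, pw γ a * (if W x a ≤ z then 1 else 0) ≤ stdGaussCDF z + 24 * k := by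
  have hn' : (n : ℝ) ≠ 0 := by positivity
  have htot : ∑ _i : Fin n, ∑ b, γ b * x b ^ 2 = 1 := by
    rw [hv]; simp; field_simp
  have hsq : ∑ a : Fin n → Fin d, pw γ a * (W x a * W x a) = 1 := by
    have := stein_id (n := n) γ x h1 hx id (fun _ _ => 1) (fun w u => by simp)
    simp only [id, mul_one, htot] at this
    rw [this, pw_sum γ h1]
  have habs : ∑ a : Fin n → Fin d, pw γ a * |W x a| ≤ 1 := by
    have : ∑ a : Fin n → Fin d, pw γ a * |W x a| ≤
        ∑ a : Fin n → Fin d, (pw γ a * (1/2) + pw γ a * (W x a * W x a) * (1/2)) := by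
      refine Finset.sum_le_sum fun a _ => ?_
      have h := pw_nonneg γ h0 a
      have : |W x a| ≤ 1/2 + W x a * W x a * (1/2) := by
        rw [← abs_mul_abs_self (W x a)]; nlinarith [sq_nonneg (|W x a| - 1)]
      nlinarith
    rw [Finset.sum_add_distrib, ← Finset.sum_mul, ← Finset.sum_mul, hsq, pw_sum γ h1] at this
    linarith
  set Z := z + 2 * k with hZ
  have hst := stein_id (n := n) γ x h1 hx (sf Z) _ (sf_ftc Z)
  have hpt : ∀ a : Fin n → Fin d, (if W x a ≤ z then (1:ℝ) else 0) ≤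
      (stdGaussCDF Z - W x a * sf Z (W x a) + (2 * |W x a| + 9) * (2 * k)) +
      ∑ i, ∑ b, γ b * x b ^ 2 * ∫ s in (0:ℝ)..1, sg Z (W x a - x (a i) + x b * s) := by
    intro a
    set R := (stdGaussCDF Z - W x a * sf Z (W x a) + (2 * |W x a| + 9) * (2 * k)) with hR
    have : ∑ i : Fin n, ∑ b, γ b * x b ^ 2 * ((if W x a ≤ z then (1:ℝ) else 0) - R) ≤
        ∑ i, ∑ b, γ b * x b ^ 2 * ∫ s in (0:ℝ)..1, sg Z (W x a - x (a i) + x b * s) := by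
      refine Finset.sum_le_sum fun i _ => Finset.sum_le_sum fun b _ => ?_
      refine mul_le_mul_of_nonneg_left ?_ (mul_nonneg (h0 b) (sq_nonneg _))
      have := pointwise z (2 * k) (W x a) (W x a - x (a i)) (x b) ?_
      · rw [← hZ] at this; linarith
      · intro s hs
        have e1 := hk (a i)
        have e2 : |x b * s| ≤ k := by
          rw [abs_mul, abs_of_nonneg hs.1]
          have := hk b; have := abs_nonneg (x b)
          nlinarith [hs.1, hs.2]
        rw [abs_le] at *
        constructor <;> linarith
    simp_rw [← Finset.sum_mul] at this
    rw [htot, one_mul] at this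
    linarith
  have hfin : ∑ a : Fin n → Fin d, pw γ a * (if W x a ≤ z then 1 else 0) ≤
      ∑ a : Fin n → Fin d, (pw γ a * (stdGaussCDF Z + 18 * k) + pw γ a * |W x a| * (4 * k)
        - pw γ a * (W x a * sf Z (W x a)) + pw γ a *
      ∑ i, ∑ b, γ b * x b ^ 2 * ∫ s in (0:ℝ)..1, sg Z (W x a - x (a i) + x b * s)) := by
    refine Finset.sum_le_sum fun a _ => ?_
    have := mul_le_mul_of_nonneg_left (hpt a) (pw_nonneg γ h0 a)
    linarith
  rw [Finset.sum_add_distrib, Finset.sum_sub_distrib, Finset.sum_add_distrib, hst,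
    ← Finset.sum_mul, ← Finset.sum_mul, pw_sum γ h1] at hfin
  have h5 := cdf_lip z (2 * k) (by linarith)
  nlinarith

end BE
namespace BE

open scoped Classical in
lemma prob_le {d n : ℕ} (P : Measure (ℕ → Fin d)) (γ : Fin d → ℝ) (h0 : ∀ b, 0 ≤ γ b)
    (hP : IsIIDPmfLaw P γ) (Q : (Fin n → Fin d) → Prop) (S : Set (ℕ → Fin d))
    (hS : ∀ ω ∈ S, Q (fun i : Fin n => ω i)) :
    (P S).toReal ≤ ∑ a : Fin n → Fin d, pw γ a * (if Q a then 1 else 0) := by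
  have hsub : S ⊆ ⋃ a ∈ Finset.univ.filter Q, {ω : ℕ → Fin d | ∀ i : Fin n, ω i = a i} := by
    intro ω hω
    simp only [Set.mem_iUnion]
    exact ⟨fun i => ω i, by simpa using hS ω hω, fun i => rfl⟩
  have h1 := (measure_mono hsub).trans (measure_biUnion_finset_le (μ := P) _ _)
  have h2 : ∑ a ∈ Finset.univ.filter Q, P {ω : ℕ → Fin d | ∀ i : Fin n, ω i = a i}
      = ENNReal.ofReal (∑ a : Fin n → Fin d, pw γ a * (if Q a then 1 else 0)) := by
    simp_rw [mul_ite, mul_one, mul_zero]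
    rw [← Finset.sum_filter, ENNReal.ofReal_sum_of_nonneg (fun a _ => pw_nonneg γ h0 a)]
    refine Finset.sum_congr rfl fun a _ => ?_
    rw [hP.2 n a, pw, ENNReal.ofReal_prod_of_nonneg (fun i _ => h0 _)]
  rw [h2] at h1
  refine ENNReal.toReal_le_of_le_ofReal ?_ h1
  refine Finset.sum_nonneg fun a _ => mul_nonneg (pw_nonneg γ h0 a) ?_
  split_ifs <;> norm_num

lemma v_eq {d : ℕ} (γ p0 : Fin d → ℝ) (h1 : ∑ b, γ b = 1) :
    vFin γ p0 = ∑ b, γ b * (Real.log (γ b / p0 b) - klFin γ p0) ^ 2 := by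
  have h : ∀ b, γ b * (Real.log (γ b / p0 b) - klFin γ p0) ^ 2 =
      γ b * Real.log (γ b / p0 b) ^ 2 - (2 * klFin γ p0) * (γ b * Real.log (γ b / p0 b))
        + γ b * klFin γ p0 ^ 2 := fun b => by ring
  simp_rw [h, Finset.sum_add_distrib, Finset.sum_sub_distrib, ← Finset.mul_sum, ← Finset.sum_mul,
    h1]
  have : ∑ i, γ i * Real.log (γ i / p0 i) = klFin γ p0 := rfl
  rw [this, vFin]; ring

lemma v_pos {d : ℕ} (γ p0 : Fin d → ℝ) (h1 : ∑ b, γ b = 1) (hγ : ∀ b, 0 < γ b)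
    (hp : ∀ b, 0 < p0 b) (hp1 : ∑ b, p0 b = 1) (hne : γ ≠ p0) : 0 < vFin γ p0 := by
  rw [v_eq γ p0 h1]
  have hnn : ∀ b ∈ Finset.univ, 0 ≤ γ b * (Real.log (γ b / p0 b) - klFin γ p0) ^ 2 := fun b _ =>
    mul_nonneg (hγ b).le (sq_nonneg _)
  refine lt_of_le_of_ne (Finset.sum_nonneg hnn) fun h => hne ?_
  have h2 := (Finset.sum_eq_zero_iff_of_nonneg hnn).1 h.symm
  have h3 : ∀ b, γ b = Real.exp (klFin γ p0) * p0 b := by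
    intro b
    have := h2 b (Finset.mem_univ b)
    have h4 : Real.log (γ b / p0 b) - klFin γ p0 = 0 := by
      simpa [(hγ b).ne'] using this
    have h5 : klFin γ p0 = Real.log (γ b / p0 b) := by linarith
    rw [h5, Real.exp_log (div_pos (hγ b) (hp b)), div_mul_cancel₀ _ (hp b).ne']
  have h6 : Real.exp (klFin γ p0) = 1 := by
    have : ∑ b, γ b = Real.exp (klFin γ p0) * ∑ b, p0 b := by
      rw [Finset.mul_sum]; exact Finset.sum_congr rfl fun b _ => h3 b
    rw [h1, hp1] at this; linarith
  ext b; rw [h3 b, h6, one_mul]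

lemma log_bd {d : ℕ} (p0 : Fin d → ℝ) (hp : ∀ b, 0 < p0 b) (c0 : ℝ) (hc0 : 0 < c0) :
    ∃ L : ℝ, 0 ≤ L ∧ ∀ γ ∈ stdSimplex ℝ (Fin d), (∀ i, c0 ≤ γ i) →
      ∀ i, |Real.log (γ i / p0 i)| ≤ L := by
  refine ⟨|Real.log c0| + ∑ j, |Real.log (p0 j)|, by positivity, ?_⟩
  intro γ hγ hc i
  have hpos := hc0.trans_le (hc i)
  rw [Real.log_div hpos.ne' (hp i).ne']
  have h1 : |Real.log (γ i)| ≤ |Real.log c0| := by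
    have hle : γ i ≤ 1 := by
      rw [← hγ.2]; exact Finset.single_le_sum (fun j _ => hγ.1 j) (Finset.mem_univ i)
    have e1 := Real.log_nonpos hpos.le hle
    have e2 := Real.log_le_log hc0 (hc i)
    rw [abs_of_nonpos e1, abs_of_nonpos (e2.trans e1)]; linarith
  have h2 : |Real.log (p0 i)| ≤ ∑ j, |Real.log (p0 j)| :=
    Finset.single_le_sum (f := fun j => |Real.log (p0 j)|) (fun j _ => abs_nonneg _)
      (Finset.mem_univ i)
  exact (abs_sub _ _).trans (add_le_add h1 h2)

end BE

/-- **Berry--Esseen bound on the GSPRT stopping time under the alternative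
(achievability proof of Theorem 2, second constraint).**
Under Conditions (A1')--(A4'), fix `ε ∈ (0,1)` and `η_0 ∈ (0, ε)`, and let `τ_n`
be the GSPRT stopping time with upper threshold
`A_n = n min_{γ∈Γ} (D(p_γ‖p_0) + Φ⁻¹(ε - η_0) √(V(p_γ‖p_0)/n))` (and any lower
threshold `B_n > 0`).  Then there is a finite constant `T_1` such that for every
`γ_0 ∈ Γ` (and every `n ≥ 1`), `P_{γ0}(τ_n > n) ≤ ε - η_0 + T_1/√n`;
consequently there exists `n_1(ε)` with `sup_{γ∈Γ} P_γ(τ_n > n) < ε` for all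
`n > n_1(ε)`.  Here `z = Φ⁻¹(ε - η_0)` is characterized by `Φ(z) = ε - η_0`. -/
theorem gsprt_second_order_constraint_Pgamma
    {d : ℕ} (p0 : Fin d → ℝ) (F : (Fin d → ℝ) → ℝ) (Γ : Set (Fin d → ℝ))
    (P0 : Measure (ℕ → Fin d)) (P : (Fin d → ℝ) → Measure (ℕ → Fin d))
    (hp0 : p0 ∈ stdSimplex ℝ (Fin d)) (hp0pos : ∀ i, 0 < p0 i)
    -- P0 and P γ are the laws of the i.i.d. observation sequence
    (hP0 : IsIIDPmfLaw P0 p0) (hP : ∀ γ ∈ Γ, IsIIDPmfLaw (P γ) γ)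
    -- (A1'): Γ is the 0-sublevel set of a (piecewise-smooth) convex function F
    (hFconv : ConvexOn ℝ Set.univ F) (hFcont : Continuous F)
    (hΓ : Γ = {γ ∈ stdSimplex ℝ (Fin d) | F γ ≤ 0})
    (hΓne : Γ.Nonempty) (hp0notin : p0 ∉ Γ)
    -- (A2')
    (c0 : ℝ) (hc0 : 0 < c0) (hΓpos : ∀ γ ∈ Γ, ∀ i, c0 ≤ γ i)
    -- (A3'): γ' minimizes D(p0‖p_γ) over Γ and F is smooth near γ'
    (γ' : Fin d → ℝ) (hγ'mem : γ' ∈ Γ)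
    (hγ'min : IsMinOn (fun γ => klFin p0 γ) Γ γ')
    (η : ℝ) (hη : 0 < η) (hFsmooth : ContDiffOn ℝ (⊤ : ℕ∞) F (Metric.ball γ' η))
    -- (A4'): nonsingularity of the Jacobian of the KKT system at q = p0
    (hA4 : ∃ lam mu : ℝ,
      (∀ i, p0 i = lam * γ' i + mu * γ' i * fderiv ℝ F γ' (Pi.single i 1)) ∧
      Function.Bijective (fderiv ℝ (kktMap F) (γ', lam, mu)))
    (ε η0 : ℝ) (hε : ε ∈ Set.Ioo (0 : ℝ) 1) (hη0 : η0 ∈ Set.Ioo (0 : ℝ) ε)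
    (z : ℝ) (hz : stdGaussCDF z = ε - η0)
    (B : ℕ → ℝ) (hB : ∀ n, 0 < B n) :
    ∃ T1 : ℝ, 0 ≤ T1 ∧
      (∀ γ0 ∈ Γ, ∀ n : ℕ, 1 ≤ n →
        (P γ0 {ω | (n : ℕ∞) <
          gsprtTau p0 (fun γ => γ) Γ
            ((n : ℝ) * sInf ((fun γ =>
              klFin γ p0 + z * Real.sqrt (vFin γ p0 / n)) '' Γ))
            (B n) ω}).toReal
          ≤ ε - η0 + T1 / Real.sqrt n) ∧
      (∃ n1 : ℕ, ∀ n : ℕ, n1 < n →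
        (⨆ γ ∈ Γ, P γ {ω | (n : ℕ∞) <
          gsprtTau p0 (fun γ => γ) Γ
            ((n : ℝ) * sInf ((fun γ =>
              klFin γ p0 + z * Real.sqrt (vFin γ p0 / n)) '' Γ))
            (B n) ω})
          < ENNReal.ofReal ε) := by
  classical
  have hS : ∀ γ ∈ Γ, γ ∈ stdSimplex ℝ (Fin d) := fun γ h => by rw [hΓ] at h; exact h.1
  have hpos : ∀ γ ∈ Γ, ∀ i, 0 < γ i := fun γ h i => hc0.trans_le (hΓpos γ h i)
  have hcpt : IsCompact Γ := by
    rw [hΓ]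
    exact (isCompact_stdSimplex ℝ (Fin d)).inter_right (isClosed_le hFcont continuous_const)
  have hlogc : ∀ i, ContinuousOn (fun γ : Fin d → ℝ => Real.log (γ i / p0 i)) Γ := by
    intro i
    refine ContinuousOn.log (by fun_prop) fun γ h => (div_pos (hpos γ h i) (hp0pos i)).ne'
  have hklc : ContinuousOn (fun γ => klFin γ p0) Γ := by
    unfold klFin
    refine continuousOn_finset_sum _ fun i _ => ?_
    exact (continuous_apply i).continuousOn.mul (hlogc i)
  have hvc : ContinuousOn (fun γ => vFin γ p0) Γ := by
    unfold vFin
    refine ContinuousOn.sub (continuousOn_finset_sum _ fun i _ => ?_) (hklc.pow 2)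
    exact (continuous_apply i).continuousOn.mul ((hlogc i).pow 2)
  obtain ⟨L, hL0, hL'⟩ := BE.log_bd p0 hp0pos c0 hc0
  have hL : ∀ γ ∈ Γ, ∀ i, |Real.log (γ i / p0 i)| ≤ L := fun γ h =>
    hL' γ (hS γ h) (hΓpos γ h)
  obtain ⟨v0, hv0, hv⟩ : ∃ v0 : ℝ, 0 < v0 ∧ ∀ γ ∈ Γ, v0 ≤ vFin γ p0 := by
    obtain ⟨g, hg, hmin⟩ := hcpt.exists_isMinOn hΓne hvc
    refine ⟨vFin g p0, BE.v_pos g p0 (hS g hg).2 (hpos g hg) hp0pos hp0.2 ?_, fun γ h => hmin h⟩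
    rintro rfl; exact hp0notin hg
  set T1 : ℝ := 24 * (2 * L / Real.sqrt v0) with hT1
  have hT1nn : 0 ≤ T1 := by positivity
  have main : ∀ γ0 ∈ Γ, ∀ n : ℕ, 1 ≤ n →
        (P γ0 {ω | (n : ℕ∞) <
          gsprtTau p0 (fun γ => γ) Γ
            ((n : ℝ) * sInf ((fun γ =>
              klFin γ p0 + z * Real.sqrt (vFin γ p0 / n)) '' Γ))
            (B n) ω}).toReal
          ≤ ε - η0 + T1 / Real.sqrt n := by
    intro γ h n hn
    have hn0 : (0:ℝ) < n := by exact_mod_cast hn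
    have hV := hv0.trans_le (hv γ h)
    set D := klFin γ p0 with hD
    set V := vFin γ p0 with hVd
    set s := Real.sqrt (n * V) with hs
    have hs0 : 0 < s := Real.sqrt_pos.2 (by positivity)
    have hs2 : s ^ 2 = n * V := Real.sq_sqrt (by positivity)
    set x : Fin d → ℝ := fun b => (Real.log (γ b / p0 b) - D) / s with hx
    have hg0 : ∀ b, 0 ≤ γ b := fun b => (hpos γ h b).le
    have hg1 := (hS γ h).2
    have hDb : |D| ≤ L := by
      rw [hD, klFin]
      refine (Finset.abs_sum_le_sum_abs _ _).trans ?_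
      calc _ ≤ ∑ i, γ i * L := by
            refine Finset.sum_le_sum fun i _ => ?_
            rw [abs_mul, abs_of_nonneg (hg0 i)]
            exact mul_le_mul_of_nonneg_left (hL γ h i) (hg0 i)
        _ = L := by rw [← Finset.sum_mul, hg1, one_mul]
    have hsn : Real.sqrt v0 * Real.sqrt n ≤ s := by
      rw [← Real.sqrt_mul hv0.le, hs, mul_comm]
      exact Real.sqrt_le_sqrt (mul_le_mul_of_nonneg_left (hv γ h) hn0.le)
    have hrv : 0 < Real.sqrt v0 := Real.sqrt_pos.2 hv0
    have hrn : 0 < Real.sqrt n := Real.sqrt_pos.2 hn0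
    have hb := BE.berry (n := n) γ x hn hg0 hg1 ?_ ?_ (2 * L / (Real.sqrt v0 * Real.sqrt n))
      (by positivity) ?_ z
    · refine (BE.prob_le (P γ) γ hg0 (hP γ h) (fun a : Fin n → Fin d => BE.W x a ≤ z) _ ?_).trans
        (hb.trans ?_)
      · intro ω hω
        simp only [Set.mem_setOf_eq] at hω
        have hnot : maxLlr p0 (fun γ => γ) Γ n ω ≤ (n : ℝ) * sInf ((fun γ =>
              klFin γ p0 + z * Real.sqrt (vFin γ p0 / n)) '' Γ) := by
          by_contra hc
          push Not at hc
          refine absurd hω (not_lt.2 ?_)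
          exact sInf_le ⟨n, rfl, Or.inl hc⟩
        have hll : ∀ g ∈ Γ, llr p0 g n ω ≤ n * L := by
          intro g hg
          unfold _root_.llr
          calc _ ≤ ∑ k ∈ Finset.range n, L :=
                Finset.sum_le_sum fun k _ => (le_abs_self _).trans (hL g hg (ω k))
            _ = _ := by simp
        have hmax : llr p0 γ n ω ≤ maxLlr p0 (fun γ => γ) Γ n ω := by
          unfold maxLlr
          have hbd : BddAbove (Set.range fun g : Fin d → ℝ => ⨆ (_ : g ∈ Γ), llr p0 g n ω) := by
            refine ⟨n * L, ?_⟩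
            rintro _ ⟨g, rfl⟩
            by_cases hg : g ∈ Γ
            · simp [hg, hll g hg]
            · simp [hg]; positivity
          refine le_trans ?_ (le_ciSup hbd γ)
          simp [h]
        have hinf : sInf ((fun γ => klFin γ p0 + z * Real.sqrt (vFin γ p0 / n)) '' Γ)
            ≤ D + z * Real.sqrt (V / n) := by
          refine csInf_le ?_ ⟨γ, h, rfl⟩
          refine (hcpt.image_of_continuousOn ?_).bddBelow
          exact hklc.add (continuousOn_const.mul (hvc.div_const _).sqrt)
        have hA : llr p0 γ n ω ≤ n * D + z * s := by
          refine (hmax.trans hnot).trans ((mul_le_mul_of_nonneg_left hinf hn0.le).trans ?_)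
          have : (n:ℝ) * Real.sqrt (V / n) = s := by
            rw [hs, ← Real.sqrt_sq hn0.le, ← Real.sqrt_mul (by positivity), Real.sqrt_sq hn0.le]
            congr 1; field_simp
          rw [← this]; apply le_of_eq; ring
        have hW : BE.W x (fun i : Fin n => ω i) = (llr p0 γ n ω - n * D) / s := by
          simp only [BE.W, hx, _root_.llr]
          rw [← Finset.sum_div, Finset.sum_sub_distrib, Finset.sum_range]
          simp
        show BE.W x (fun i : Fin n => ω i) ≤ z
        rw [hW, div_le_iff₀ hs0]; linarith
      · rw [hz, hT1]
        apply le_of_eq; field_simp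
    · simp only [hx]
      have : ∀ b, γ b * ((Real.log (γ b / p0 b) - D) / s) =
        (γ b * Real.log (γ b / p0 b) - γ b * D) / s := fun b => by ring
      simp_rw [this]
      rw [← Finset.sum_div, Finset.sum_sub_distrib, ← Finset.sum_mul, hg1, one_mul, hD, klFin,
        sub_self, zero_div]
    · simp only [hx, div_pow, hs2]
      have : ∀ b, γ b * ((Real.log (γ b / p0 b) - D) ^ 2 / (n * V)) =
        γ b * (Real.log (γ b / p0 b) - D) ^ 2 / (n * V) := fun b => by ring
      simp_rw [this]
      rw [← Finset.sum_div, hD, ← BE.v_eq γ p0 hg1, ← hVd]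
      field_simp
    · intro b
      simp only [hx]
      rw [abs_div, abs_of_pos hs0]
      have : |Real.log (γ b / p0 b) - D| ≤ 2 * L :=
        (abs_sub _ _).trans (by linarith [hL γ h b])
      exact div_le_div₀ (by positivity) this (by positivity) hsn
  refine ⟨T1, hT1nn, main, ?_⟩
  have hlim : Tendsto (fun n : ℕ => T1 / Real.sqrt n) atTop (nhds 0) :=
    tendsto_const_nhds.div_atTop (Real.tendsto_sqrt_atTop.comp tendsto_natCast_atTop_atTop)
  have hη02 : 0 < η0 / 2 := by linarith [hη0.1]
  obtain ⟨n1, hn1⟩ := eventually_atTop.1 (hlim.eventually (gt_mem_nhds hη02))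
  refine ⟨n1, fun n hn => ?_⟩
  have hle : (⨆ γ ∈ Γ, P γ {ω | (n : ℕ∞) <
          gsprtTau p0 (fun γ => γ) Γ
            ((n : ℝ) * sInf ((fun γ =>
              klFin γ p0 + z * Real.sqrt (vFin γ p0 / n)) '' Γ))
            (B n) ω}) ≤ ENNReal.ofReal (ε - η0 / 2) := by
    refine iSup₂_le fun γ h => ?_
    have := (hP γ h).1
    rw [← ENNReal.ofReal_toReal (measure_ne_top (P γ) _)]
    refine ENNReal.ofReal_le_ofReal ((main γ h n (by omega)).trans ?_)
    have := hn1 n hn.le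
    linarith
  refine hle.trans_lt ?_
  rw [ENNReal.ofReal_lt_ofReal_iff hε.1]
  linarith

end
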